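/- Let n ≥ 2 and let f : {0,1}^n → {0,1} be a local rule of width n. If f is L-conservative for L = 2n−2, then f is conservative, i.e. f is L-conservative for every integer L > 0. -/

import Mathlib

/-- A local rule `f` of width `n` is `L`-conservative if for every `L`-periodic
bisequence `x : ℤ → Fin 2`, the sum of `f` applied to the `n`-blocks starting at
positions `1,…,L` equals the sum of `x` over positions `1,…,L`. -/
def LCons (n : ℕ) (f : (Fin n → Fin 2) → Fin 2) (L : ℕ) : Prop :=
  ∀ x : ℤ → Fin 2, (∀ i : ℤ, x (i + L) = x i) →
    (∑ i ∈ Finset.range L, (f (fun k => x ((i : ℤ) + 1 + (k : ℕ)))).val) =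
      ∑ i ∈ Finset.range L, (x ((i : ℤ) + 1)).val

/-- Möbius coefficients. -/
def mobC (g : Finset ℕ → ℤ) (S : Finset ℕ) : ℤ :=
  g S - ∑ T ∈ S.ssubsets.attach, mobC g T.1
termination_by S.card
decreasing_by exact Finset.card_lt_card (Finset.mem_ssubsets.1 T.2)

lemma mobC_sum (g : Finset ℕ → ℤ) (S : Finset ℕ) : g S = ∑ T ∈ S.powerset, mobC g T := by
  have h1 : S.powerset = insert S S.ssubsets := by
    simp [Finset.ssubsets, Finset.insert_erase]
  rw [h1, Finset.sum_insert (by simp [Finset.mem_ssubsets])]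
  rw [mobC, Finset.sum_attach S.ssubsets (fun T => mobC g T)]
  ring

lemma mob_zero (N : Finset ℕ → ℤ) (h : ∀ S : Finset ℕ, ∑ T ∈ S.powerset, N T = 0) :
    ∀ S, N S = 0 := by
  intro S
  induction S using Finset.strongInduction with
  | H S ih =>
    have h1 : S.powerset = insert S S.ssubsets := by
      simp [Finset.ssubsets, Finset.insert_erase]
    have h2 := h S
    rw [h1, Finset.sum_insert (by simp [Finset.mem_ssubsets])] at h2
    rw [Finset.sum_eq_zero (fun T hT => ih T (Finset.mem_ssubsets.1 hT))] at h2
    simpa using h2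

lemma per_sum (L : ℕ) (p : ℕ → ℤ) (hp : ∀ i, p (i + L) = p i) (t : ℕ) :
    ∑ i ∈ Finset.range L, p (i + t) = ∑ i ∈ Finset.range L, p i := by
  induction t with
  | zero => simp
  | succ t ih =>
    rw [← ih]
    have h1 := Finset.sum_range_succ (fun i => p (i + t)) L
    have h2 := Finset.sum_range_succ' (fun i => p (i + t)) L
    have h3 : p (L + t) = p (0 + t) := by rw [add_comm, hp]; simp
    have h4 : ∑ i ∈ Finset.range L, p (i + (t + 1)) = ∑ i ∈ Finset.range L, p (i + 1 + t) :=
      Finset.sum_congr rfl (fun i _ => by congr 1; ring)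
    rw [h4]; linarith

/-- number of occurrences of the pattern `T` -/
def occ (L : ℕ) (x : ℤ → Fin 2) (T : Finset ℕ) : ℤ :=
  ∑ i ∈ Finset.range L, if ∀ k ∈ T, x ((i : ℤ) + 1 + (k : ℕ)) = 1 then 1 else 0

lemma occ_shift (L : ℕ) (x : ℤ → Fin 2) (hx : ∀ i : ℤ, x (i + L) = x i) (T : Finset ℕ) (t : ℕ) :
    occ L x (T.image (· + t)) = occ L x T := by
  unfold occ
  rw [← per_sum L (fun i => if ∀ k ∈ T, x ((i : ℤ) + 1 + (k : ℕ)) = 1 then 1 else 0) _ t]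
  · apply Finset.sum_congr rfl
    intro i _
    simp only [Finset.forall_mem_image]
    push_cast
    have : ∀ k : ℕ, (i : ℤ) + 1 + (k + t) = i + t + 1 + k := fun k => by ring
    simp only [this]
  · intro i
    have : ∀ k : ℕ, x (((i + L : ℕ) : ℤ) + 1 + k) = x (i + 1 + k) := fun k => by
      rw [← hx (i + 1 + k)]; congr 1; push_cast; ring
    simp only [this]

def gg (n : ℕ) (f : (Fin n → Fin 2) → Fin 2) (D : Finset ℕ) : ℤ :=
  ((f (fun k => if k.val ∈ D then 1 else 0)).val : ℤ) - if 0 ∈ D then 1 else 0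

lemma lcons_iff (n : ℕ) (hn : 2 ≤ n) (f : (Fin n → Fin 2) → Fin 2) (L : ℕ) (x : ℤ → Fin 2) :
    ((∑ i ∈ Finset.range L, (f (fun k => x ((i : ℤ) + 1 + (k : ℕ)))).val) =
      ∑ i ∈ Finset.range L, (x ((i : ℤ) + 1)).val) ↔
    ∑ T ∈ (Finset.range n).powerset, mobC (gg n f) T * occ L x T = 0 := by
  have key : ∀ i : ℕ, ((f (fun k => x ((i : ℤ) + 1 + (k : ℕ)))).val : ℤ) - ((x ((i : ℤ) + 1)).val : ℤ)
      = ∑ T ∈ (Finset.range n).powerset, mobC (gg n f) T *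
        if ∀ k ∈ T, x ((i : ℤ) + 1 + (k : ℕ)) = 1 then 1 else 0 := by
    intro i
    have e01 : ∀ a : Fin 2, (if a = 1 then (1 : Fin 2) else 0) = a := by decide
    have e02 : ∀ a : Fin 2, (if a = 1 then (1 : ℤ) else 0) = (a.val : ℤ) := by decide
    have h1 := mobC_sum (gg n f) ((Finset.range n).filter (fun k : ℕ => x ((i : ℤ) + 1 + (k : ℕ)) = 1))
    have h2 : gg n f ((Finset.range n).filter (fun k : ℕ => x ((i : ℤ) + 1 + (k : ℕ)) = 1)) =
        ((f (fun k => x ((i : ℤ) + 1 + (k : ℕ)))).val : ℤ) - ((x ((i : ℤ) + 1)).val : ℤ) := by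
      unfold gg
      have h0 : 0 < n := by omega
      simp [e01, e02, h0]
    rw [← h2, h1]
    simp only [mul_ite, mul_one, mul_zero]
    rw [← Finset.sum_filter]
    apply Finset.sum_congr _ (fun _ _ => rfl)
    ext T
    simp only [Finset.mem_powerset, Finset.mem_filter, Finset.subset_iff]
    constructor
    · intro h; exact ⟨fun k hk => (h hk).1, fun k hk => (h hk).2⟩
    · intro h k hk; exact ⟨h.1 hk, h.2 k hk⟩
  unfold occ
  simp only [Finset.mul_sum]
  rw [Finset.sum_comm]
  rw [← Finset.sum_congr rfl (fun i _ => key i), Finset.sum_sub_distrib, sub_eq_zero]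
  norm_cast

/-- translate down to contain 0 -/
noncomputable def nrm (T : Finset ℕ) : Finset ℕ := T.image (· - sInf (T : Set ℕ))

lemma nrm_image (T : Finset ℕ) : (nrm T).image (· + sInf (T : Set ℕ)) = T := by
  unfold nrm
  rw [Finset.image_image]
  conv_rhs => rw [← Finset.image_id (s := T)]
  apply Finset.image_congr
  intro k hk
  have := Nat.sInf_le hk
  simp only [Function.comp, id]
  omega

lemma nrm_zero (T : Finset ℕ) (h : (nrm T).Nonempty) : 0 ∈ nrm T := by
  unfold nrm at *
  have hT : T.Nonempty := by simpa using h
  have := Nat.sInf_mem (s := (T : Set ℕ)) (by simpa using hT)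
  exact Finset.mem_image.2 ⟨_, this, by simp⟩

lemma nrm_mem (n : ℕ) (T : Finset ℕ) (h : T ⊆ Finset.range n) : nrm T ⊆ Finset.range n := by
  intro k hk
  obtain ⟨a, ha, rfl⟩ := Finset.mem_image.1 hk
  have := Finset.mem_range.1 (h ha)
  simp only [Finset.mem_range]; omega

def img (M i : ℕ) (T : Finset ℕ) : Finset ℕ := T.image (fun k => (i + k) % M)

lemma img_shift (M i t : ℕ) (T : Finset ℕ) : img M i (T.image (· + t)) = img M (i + t) T := by
  unfold img
  rw [Finset.image_image]
  apply Finset.image_congr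
  intro k _
  simp only [Function.comp]
  congr 1; ring

lemma img_per (M i : ℕ) (T : Finset ℕ) : img M (i + M) T = img M i T := by
  unfold img
  apply Finset.image_congr
  intro k _
  simp only
  rw [show i + M + k = i + k + M by ring, Nat.add_mod_right]

lemma img_mod (M i : ℕ) (T : Finset ℕ) : img M (i % M) T = img M i T := by
  unfold img
  apply Finset.image_congr
  intro k _
  simp

lemma img_zero (M : ℕ) (T : Finset ℕ) (h : ∀ k ∈ T, k < M) : img M 0 T = T := by
  unfold img
  conv_rhs => rw [← Finset.image_id (s := T)]
  apply Finset.image_congr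
  intro k hk
  simp [Nat.mod_eq_of_lt (h k hk)]

lemma rigid (m s : ℕ) (hm : 1 ≤ m) (A B : Finset ℕ) (hA : ∀ k ∈ A, k ≤ m) (hB : ∀ k ∈ B, k ≤ m)
    (hA0 : A.Nonempty → 0 ∈ A) (hB0 : B.Nonempty → 0 ∈ B) (h : img (2 * m) s B = A) : B = A := by
  rw [← img_mod] at h
  have hs : s % (2 * m) < 2 * m := Nat.mod_lt _ (by omega)
  generalize s % (2 * m) = r at h hs
  rcases B.eq_empty_or_nonempty with rfl | hBn
  · simpa [img] using h
  have b0 := hB0 hBn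
  have a0 : 0 ∈ A := hA0 (by rw [← h]; exact hBn.image _)
  rcases Nat.eq_zero_or_pos r with rfl | hr
  · rw [← h, img_zero]; intro k hk; have := hB k hk; omega
  have hmem : ∀ k ∈ B, (r + k) % (2 * m) ∈ A := fun k hk => by
    rw [← h]; exact Finset.mem_image_of_mem _ hk
  have hrm : r ≤ m := by
    have := hA _ (hmem 0 b0)
    rwa [add_zero, Nat.mod_eq_of_lt hs] at this
  have h0 := a0
  rw [← h] at h0
  obtain ⟨b, hb, hb2⟩ := Finset.mem_image.1 h0
  have hbm := hB b hb
  have hrb : r = m ∧ b = m := by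
    by_contra hne
    have : r + b < 2 * m := by omega
    simp only [Nat.mod_eq_of_lt this] at hb2
    omega
  obtain ⟨rfl, rfl⟩ := hrb
  have hB2 : B = {0, b} := by
    ext k
    simp only [Finset.mem_insert, Finset.mem_singleton]
    constructor
    · intro hk
      by_contra hne
      have h1 := hB k hk
      have h2 := hA _ (hmem k hk)
      rw [Nat.mod_eq_of_lt (by omega)] at h2
      omega
    · rintro (rfl | rfl) <;> assumption
  rw [← h, hB2]
  ext k
  have e1 : b % (2 * b) = b := Nat.mod_eq_of_lt (by omega)
  have e2 : (b + b) % (2 * b) = 0 := by rw [← two_mul]; simp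
  simp [img, e1, e2]
  tauto

def cnt (M : ℕ) (T A : Finset ℕ) : ℤ := ∑ i ∈ Finset.range M, if img M i T = A then 1 else 0

lemma cnt_eq (m : ℕ) (hm : 1 ≤ m) (T A : Finset ℕ) (hT : T ⊆ Finset.range (m + 1))
    (hA : A ⊆ Finset.range (m + 1)) (hA0 : A.Nonempty → 0 ∈ A) :
    cnt (2 * m) T A = if nrm T = A then cnt (2 * m) A A else 0 := by
  split_ifs with h
  · unfold cnt
    conv_lhs => rw [← nrm_image T, h]
    simp only [img_shift]
    exact per_sum (2 * m) (fun i => if img (2 * m) i A = A then 1 else 0)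
      (fun i => by simp only [img_per]) _
  · unfold cnt
    apply Finset.sum_eq_zero
    intro i _
    rw [if_neg]
    intro h2
    rw [← nrm_image T, img_shift] at h2
    apply h
    refine rigid m _ hm A (nrm T) (fun k hk => ?_) (fun k hk => ?_) hA0 (nrm_zero T) h2
    · have := Finset.mem_range.1 (hA hk); omega
    · have := Finset.mem_range.1 (nrm_mem _ T hT hk); omega

lemma cnt_pos (m : ℕ) (hm : 1 ≤ m) (A : Finset ℕ) (hA : A ⊆ Finset.range (m + 1)) :
    0 < cnt (2 * m) A A := by
  unfold cnt
  apply Finset.sum_pos'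
  · intro i _; split_ifs <;> simp
  · refine ⟨0, by simp; omega, ?_⟩
    rw [if_pos]
    · simp
    · apply img_zero
      intro k hk
      have := Finset.mem_range.1 (hA hk); omega

theorem stmt_0 (n : ℕ) (hn : 2 ≤ n) (f : (Fin n → Fin 2) → Fin 2)
    (h : LCons n f (2 * n - 2)) :
    ∀ L : ℕ, 0 < L → LCons n f L := by
  obtain ⟨m, rfl⟩ : ∃ m, n = m + 1 := ⟨n - 1, by omega⟩
  have hm : 1 ≤ m := by omega
  rw [show 2 * (m + 1) - 2 = 2 * m by omega] at h
  set c := mobC (gg (m + 1) f) with hc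
  have hN : ∀ R : Finset ℕ,
      ∑ T ∈ (Finset.range (m + 1)).powerset, c T * cnt (2 * m) T R = 0 := by
    apply mob_zero
    intro S
    have hx := h (fun j => if ((j - 1) % ((2 * m : ℕ) : ℤ)).toNat ∈ S then 1 else 0) (by
      intro i
      rw [show i + ((2 * m : ℕ) : ℤ) - 1 = i - 1 + ((2 * m : ℕ) : ℤ) by ring, Int.add_emod_right])
    replace hx := (lcons_iff (m + 1) hn f (2 * m)
      (fun j => if ((j - 1) % ((2 * m : ℕ) : ℤ)).toNat ∈ S then 1 else 0)).1 hx
    rw [← hx, Finset.sum_comm]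
    apply Finset.sum_congr rfl
    intro T _
    rw [← Finset.mul_sum]
    congr 1
    unfold cnt occ
    rw [Finset.sum_comm]
    apply Finset.sum_congr rfl
    intro i _
    rw [Finset.sum_ite_eq]
    congr 1
    have e : ∀ k : ℕ, (((i : ℤ) + 1 + k - 1) % ((2 * m : ℕ) : ℤ)).toNat = (i + k) % (2 * m) := by
      intro k
      rw [show (i : ℤ) + 1 + k - 1 = ((i + k : ℕ) : ℤ) by push_cast; ring, ← Int.natCast_mod,
        Int.toNat_natCast]
    simp only [e, Finset.mem_powerset, img, Finset.image_subset_iff]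
    simp
  have hC : ∀ A : Finset ℕ, A ⊆ Finset.range (m + 1) → (A.Nonempty → 0 ∈ A) →
      ∑ T ∈ (Finset.range (m + 1)).powerset with nrm T = A, c T = 0 := by
    intro A hA hA0
    have h1 := hN A
    rw [Finset.sum_congr rfl (fun T hT => by
      rw [cnt_eq m hm T A (Finset.mem_powerset.1 hT) hA hA0])] at h1
    simp only [mul_ite, mul_zero] at h1
    rw [← Finset.sum_filter, ← Finset.sum_mul] at h1
    exact (mul_eq_zero.1 h1).resolve_right (cnt_pos m hm A hA).ne'
  intro L _ x hx
  rw [lcons_iff _ hn, ← hc]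
  rw [← Finset.sum_fiberwise_of_maps_to (s := (Finset.range (m + 1)).powerset)
    (t := (Finset.range (m + 1)).powerset.image nrm) (g := nrm)
    (fun T hT => Finset.mem_image_of_mem _ hT)]
  apply Finset.sum_eq_zero
  intro A hA
  obtain ⟨T₀, hT₀, rfl⟩ := Finset.mem_image.1 hA
  rw [Finset.sum_congr rfl (g := fun T => c T * occ L x (nrm T₀)), ← Finset.sum_mul,
    hC _ (nrm_mem _ _ (Finset.mem_powerset.1 hT₀)) (nrm_zero T₀), zero_mul]
  intro T hT
  rw [← (Finset.mem_filter.1 hT).2]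
  conv_lhs => rw [← nrm_image T, occ_shift L x hx]
  rw [nrm_image]
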